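/- arXiv:2506.03806 — 8 statements merged into one kernel-verified Lean document; each statement's English description precedes it below -/
import Mathlib

section
/- Let b,d,x ∈ ℂ with x ≠ 0 and b² − d²x² ≠ 0, and set S = [[d,b,0],[b/x²,d,0],[0,0,1]], R = [[0,x,0],[1/x,0,0],[0,0,1]], G₁ = diag(−1,1,1), G₂ = diag(1,−1,1). Then all four matrices are invertible and they satisfy the defining relations of TVB₂: R² = I₃, G₁² = I₃, G₂² = I₃, G₁G₂ = G₂G₁, RG₁ = G₂R, and RSR = G₂G₁SG₁G₂. (Hence the assignment σ₁ ↦ S, ρ₁ ↦ R, γ₁ ↦ G₁, γ₂ ↦ G₂ defines the representation ζ₁ of TVB₂ into GL₃(ℂ).) -/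
/-!
`R`, `G₁`, `G₂` are involutions, hence invertible, and `det S = -(b² - d²x²) / x² ≠ 0`.
The relations are entrywise computations; in the last one both sides equal `S`.
-/

/-- The assignment defining the representation ζ₁ of TVB₂: the given matrices are
invertible and satisfy the defining relations of TVB₂. -/
theorem stmt_2 (b d x : ℂ) (hx : x ≠ 0) (hbd : b ^ 2 - d ^ 2 * x ^ 2 ≠ 0)
    (S R G₁ G₂ : Matrix (Fin 3) (Fin 3) ℂ)
    (hS : S = !![d, b, 0; b / x ^ 2, d, 0; 0, 0, 1])
    (hR : R = !![0, x, 0; 1 / x, 0, 0; 0, 0, 1])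
    (hG₁ : G₁ = !![(-1 : ℂ), 0, 0; 0, 1, 0; 0, 0, 1])
    (hG₂ : G₂ = !![(1 : ℂ), 0, 0; 0, -1, 0; 0, 0, 1]) :
    IsUnit S ∧ IsUnit R ∧ IsUnit G₁ ∧ IsUnit G₂ ∧
    R * R = 1 ∧ G₁ * G₁ = 1 ∧ G₂ * G₂ = 1 ∧
    G₁ * G₂ = G₂ * G₁ ∧ R * G₁ = G₂ * R ∧
    R * S * R = G₂ * G₁ * S * G₁ * G₂ := by
  have hRR : R * R = 1 := by
    subst hR
    ext i j
    fin_cases i <;> fin_cases j <;> simp [Matrix.mul_apply, Fin.sum_univ_three, hx]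
  have hG₁G₁ : G₁ * G₁ = 1 := by
    subst hG₁
    ext i j
    fin_cases i <;> fin_cases j <;> simp [Matrix.mul_apply, Fin.sum_univ_three]
  have hG₂G₂ : G₂ * G₂ = 1 := by
    subst hG₂
    ext i j
    fin_cases i <;> fin_cases j <;> simp [Matrix.mul_apply, Fin.sum_univ_three]
  have hdet : S.det ≠ 0 := by
    have h : S.det = -(b ^ 2 - d ^ 2 * x ^ 2) / x ^ 2 := by
      subst hS
      simp [Matrix.det_fin_three]
      field_simp
    rw [h]
    exact div_ne_zero (neg_ne_zero.mpr hbd) (pow_ne_zero 2 hx)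
  refine ⟨(Matrix.isUnit_iff_isUnit_det S).mpr hdet.isUnit, IsUnit.of_mul_eq_one R hRR,
    IsUnit.of_mul_eq_one G₁ hG₁G₁, IsUnit.of_mul_eq_one G₂ hG₂G₂, hRR, hG₁G₁, hG₂G₂, ?_, ?_, ?_⟩
  · subst hG₁ hG₂
    ext i j
    fin_cases i <;> fin_cases j <;> simp [Matrix.mul_apply, Fin.sum_univ_three]
  · subst hR hG₁ hG₂
    ext i j
    fin_cases i <;> fin_cases j <;> simp [Matrix.mul_apply, Fin.sum_univ_three]
  -- Both sides equal `S`: the weighted transposition `R` and the diagonal matrix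
  -- `G₁ G₂ = diag(-1, -1, 1)` are involutions commuting with `S`.
  · have hl : R * S * R = S := by
      subst hR hS
      ext i j
      fin_cases i <;> fin_cases j <;> simp [Matrix.mul_apply, Fin.sum_univ_three] <;> field_simp
    have hr : G₂ * G₁ * S * G₁ * G₂ = S := by
      subst hS hG₁ hG₂
      ext i j
      fin_cases i <;> fin_cases j <;> simp [Matrix.mul_apply, Fin.sum_univ_three]
    rw [hl, hr]
end

section
/- Let b,d,w,x ∈ ℂ with x ≠ 0, and suppose the matrix S = [[(2bw+dx)/x, b, 0],[(b−bw²)/x², d, 0],[0,0,1]] is invertible. Set R = [[w,x,0],[(1−w²)/x,−w,0],[0,0,1]] and G₁ = G₂ = I₃. Then R is invertible and the four matrices satisfy the defining relations of TVB₂: R² = I₃, G₁² = I₃, G₂² = I₃, G₁G₂ = G₂G₁, RG₁ = G₂R, and RSR = G₂G₁SG₁G₂. (Hence the assignment σ₁ ↦ S, ρ₁ ↦ R, γ₁ ↦ G₁, γ₂ ↦ G₂ defines the representation ζ₂ of TVB₂ into GL₃(ℂ).) -/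
/-- The assignment defining the representation ζ₂ of TVB₂: the given matrices are
invertible and satisfy the defining relations of TVB₂. -/
theorem stmt_3 (b d w x : ℂ) (hx : x ≠ 0)
    (S R G₁ G₂ : Matrix (Fin 3) (Fin 3) ℂ)
    (hS : S = !![(2 * b * w + d * x) / x, b, 0;
                 (b - b * w ^ 2) / x ^ 2, d, 0; 0, 0, 1])
    (hSu : IsUnit S)
    (hR : R = !![w, x, 0; (1 - w ^ 2) / x, -w, 0; 0, 0, 1])
    (hG₁ : G₁ = 1) (hG₂ : G₂ = 1) :
    IsUnit R ∧
    R * R = 1 ∧ G₁ * G₁ = 1 ∧ G₂ * G₂ = 1 ∧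
    G₁ * G₂ = G₂ * G₁ ∧ R * G₁ = G₂ * R ∧
    R * S * R = G₂ * G₁ * S * G₁ * G₂ := by
  have hRR : R * R = 1 := by
    rw [hR, Matrix.one_fin_three]
    ext i j
    fin_cases i <;> fin_cases j <;> simp [Matrix.mul_apply, Fin.sum_univ_three] <;>
      field_simp <;> ring
  -- On the upper-left 2×2 block, `S = (b / x) R + (d + b w / x) I`, so `S` commutes with `R`.
  have hcomm : R * S = S * R := by
    rw [hR, hS]
    ext i j
    fin_cases i <;> fin_cases j <;> simp [Matrix.mul_apply, Fin.sum_univ_three] <;>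
      field_simp <;> ring
  subst hG₁ hG₂
  refine ⟨IsUnit.of_mul_eq_one R hRR, hRR, by simp, by simp, rfl, by simp, ?_⟩
  rw [hcomm, mul_assoc, hRR]
  simp
end

section
/- Let b,d,x ∈ ℂ with x ≠ 0. Then there is no nonzero vector v ∈ ℂ² that is a simultaneous eigenvector of the four 2×2 complex matrices [[d,b],[b/x²,d]], [[0,x],[1/x,0]], [[−1,0],[0,1]], and [[1,0],[0,−1]]. (These are the 2×2 composition factors of the images of σ₁, ρ₁, γ₁, γ₂ under the representation ζ₁ of TVB₂; hence ζ₁ is reducible to degree 2 but not further reducible to degree 1.) -/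
/-- The 2×2 composition factors of the images of σ₁, ρ₁, γ₁, γ₂ under ζ₁ have no
common eigenvector, so ζ₁ is not further reducible to degree 1. -/
theorem stmt_6 (b d x : ℂ) (hx : x ≠ 0) :
    ¬ ∃ v : Fin 2 → ℂ, v ≠ 0 ∧
      (∃ l : ℂ, (!![d, b; b / x ^ 2, d]).mulVec v = l • v) ∧
      (∃ l : ℂ, (!![0, x; 1 / x, 0]).mulVec v = l • v) ∧
      (∃ l : ℂ, (!![(-1 : ℂ), 0; 0, 1]).mulVec v = l • v) ∧
      (∃ l : ℂ, (!![(1 : ℂ), 0; 0, -1]).mulVec v = l • v) := by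
  rintro ⟨v, hv, -, ⟨l, hl⟩, ⟨m, hm⟩, -⟩
  have l0 := congrFun hl 0
  have l1 := congrFun hl 1
  have m0 := congrFun hm 0
  have m1 := congrFun hm 1
  simp only [Matrix.mulVec, dotProduct, Fin.sum_univ_two, Matrix.of_apply,
    Matrix.cons_val_zero, Matrix.cons_val_one, Pi.smul_apply, smul_eq_mul] at l0 l1 m0 m1
  -- `diag(-1, 1)` has distinct eigenvalues, so its eigenvectors lie on the coordinate axes.
  have h : v 0 * v 1 = 0 := by linear_combination (-v 1 / 2) * m0 + (v 0 / 2) * m1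
  -- The matrix of `ρ₁` swaps the two axes, so one vanishing coordinate forces the other to vanish.
  have hz : v 0 = 0 ∧ v 1 = 0 := by
    rcases mul_eq_zero.mp h with h | h
    · simp_all
    · simp_all
  exact hv (by ext i; fin_cases i; exacts [hz.1, hz.2])
end

section
/- Fix n ≥ 3. For a 2×2 complex matrix M and 1 ≤ i ≤ n, let Lᵢ(M) denote the (n+1)×(n+1) complex matrix that agrees with the identity everywhere except that its 2×2 submatrix in rows and columns i, i+1 equals M. Let S, R, G be invertible 2×2 complex matrices and suppose the matrices σᵢ = Lᵢ(S), ρᵢ = Lᵢ(R) (1 ≤ i ≤ n−1) and γⱼ = Lⱼ(G) (1 ≤ j ≤ n) satisfy all defining relations of TVBₙ: σᵢσᵢ₊₁σᵢ = σᵢ₊₁σᵢσᵢ₊₁; σᵢσⱼ = σⱼσᵢ for |i−j| ≥ 2; ρᵢ² = I; ρᵢρⱼ = ρⱼρᵢ for |i−j| ≥ 2; ρᵢρᵢ₊₁ρᵢ = ρᵢ₊₁ρᵢρᵢ₊₁; σᵢρⱼ = ρⱼσᵢ for |i−j| ≥ 2; ρᵢρᵢ₊₁σᵢ = σᵢ₊₁ρᵢρᵢ₊₁;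 γⱼ² = I; γᵢγⱼ = γⱼγᵢ; γⱼρᵢ = ρᵢγⱼ and γⱼσᵢ = σᵢγⱼ for |i−j| ≥ 2; ρᵢγᵢ = γᵢ₊₁ρᵢ; ρᵢσᵢρᵢ = γᵢ₊₁γᵢσᵢγᵢγᵢ₊₁. Then one of the following seven cases holds: (1) there exist nonzero b,c,r ∈ ℂ with r² = b/c such that S = [[0,b],[c,0]], R = [[0,−r],[−1/r,0]], G = diag(−1,1); (2) there exist nonzero b,c,r ∈ ℂ with r² = b/c such that S = [[0,b],[c,0]], R = [[0,r],[1/r,0]], G = diag(−1,1); (3) there exist nonzero b,c,r ∈ ℂ with r² = b/c such that S = [[0,b],[c,0]], R = [[0,−r],[−1/r,0]], G = I₂; (4) there exist nonzero b,c,r ∈ ℂ with r² = b/c such that S = [[0,b],[c,0]], R = [[0,r],[1/r,0]], G = I₂; (5) there exists nonzero x ∈ ℂ such that S = I₂, R = [[0,x],[1/x,0]], G = diag(−1,1); (6) there exists nonzero x ∈ ℂ such that S = I₂, R = [[0,x],[1/x,0]], G = I₂; (7) S = R = I₂ and G = I₂. -/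
/-!
The relations among the generators with indices 1 and 2 force the claim. Those matrices preserve
the splitting of `ℂⁿ⁺¹` into the first three coordinates and the rest, so truncating to the top left
3×3 corner (`corner`) is multiplicative on them (`corner_localBlock_mul`), and each relation becomes
a system of polynomial equations in the entries of `S`, `R`, `G`.

* `γ₁γ₂ = γ₂γ₁` and `γ₁² = 1` make `G` diagonal with entries `±1`; `ρ₁γ₁ = γ₂ρ₁` then forces
  `G = diag(g, 1)`, and the diagonal of `R` vanishes unless `g = 1`.
* `ρ₁² = 1` and `ρ₁ρ₂ρ₁ = ρ₂ρ₁ρ₂` leave `R = 1` or `R = [[0, q], [1/q, 0]]`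
  (`involution_braid_cases`).
* If `R = 1`, then `ρ₁ρ₂σ₁ = σ₂ρ₁ρ₂` reads `σ₁ = σ₂`, so `S = 1`.
* Otherwise `ρ₁σ₁ρ₁ = γ₂γ₁σ₁γ₁γ₂` says `S₁₁ = S₂₂` and `S₁₂ = q² S₂₁`, and the braid relation for
  `S` gives `S = 1` or `S` antidiagonal. In the latter case `r = q` satisfies `r² = b / c`.

Cases (1) and (3) of the conclusion are cases (2) and (4) with `r` replaced by `-r`, so the argument
lands in (2), (4), (5), (6) or (7).
-/

/-- `localBlock n i M` is the (n+1)×(n+1) complex matrix agreeing with the identity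
except that its 2×2 submatrix in (1-indexed) rows and columns i, i+1 equals `M`. -/
def localBlock (n : ℕ) (i : ℕ) (M : Matrix (Fin 2) (Fin 2) ℂ) :
    Matrix (Fin (n + 1)) (Fin (n + 1)) ℂ :=
  Matrix.of fun r s =>
    if r.val + 1 = i ∧ s.val + 1 = i then M 0 0
    else if r.val + 1 = i ∧ s.val = i then M 0 1
    else if r.val = i ∧ s.val + 1 = i then M 1 0
    else if r.val = i ∧ s.val = i then M 1 1
    else if r = s then 1 else 0

/-- The top left 3×3 corner of an (n+1)×(n+1) matrix. -/
def corner {n : ℕ} (hn : 3 ≤ n + 1) (A : Matrix (Fin (n + 1)) (Fin (n + 1)) ℂ) :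
    Matrix (Fin 3) (Fin 3) ℂ :=
  A.submatrix (Fin.castLE hn) (Fin.castLE hn)

/-- Multiplicativity holds because the first three rows of the left factor vanish outside the
first three columns. -/
lemma corner_localBlock_mul {n : ℕ} (hn : 3 ≤ n + 1) {i : ℕ} (hi : i ≤ 2)
    (M : Matrix (Fin 2) (Fin 2) ℂ) (B : Matrix (Fin (n + 1)) (Fin (n + 1)) ℂ) :
    corner hn (localBlock n i M * B) = corner hn (localBlock n i M) * corner hn B := by
  ext r s
  simp only [corner, Matrix.submatrix_apply, Matrix.mul_apply]
  symm
  refine Fintype.sum_of_injective (Fin.castLE hn) (Fin.castLE_injective hn) _ _ ?_ (fun _ => rfl)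
  intro k hk
  have hk3 : 3 ≤ k.val := by
    by_contra hlt
    exact hk ⟨⟨k.val, by omega⟩, by ext; rfl⟩
  have hr := r.isLt
  have hz : localBlock n i M (Fin.castLE hn r) k = 0 := by
    simp only [localBlock, Matrix.of_apply, Fin.val_castLE, Fin.ext_iff]
    repeat rw [if_neg (by omega)]
  rw [hz, zero_mul]

lemma corner_one {n : ℕ} (hn : 3 ≤ n + 1) : corner hn 1 = 1 :=
  Matrix.submatrix_one _ (Fin.castLE_injective hn)

lemma corner_localBlock_one {n : ℕ} (hn : 3 ≤ n + 1) (M : Matrix (Fin 2) (Fin 2) ℂ) :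
    corner hn (localBlock n 1 M) = !![M 0 0, M 0 1, 0; M 1 0, M 1 1, 0; 0, 0, 1] := by
  ext r s
  fin_cases r <;> fin_cases s <;>
    simp [corner, localBlock, Fin.ext_iff, -Fin.val_eq_zero_iff]

lemma corner_localBlock_two {n : ℕ} (hn : 3 ≤ n + 1) (M : Matrix (Fin 2) (Fin 2) ℂ) :
    corner hn (localBlock n 2 M) = !![1, 0, 0; 0, M 0 0, M 0 1; 0, M 1 0, M 1 1] := by
  ext r s
  fin_cases r <;> fin_cases s <;> simp [corner, localBlock, Fin.ext_iff]

/-- The entries `p, q, r, s` of a 2×2 involution whose local blocks satisfy the braid relation;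
the last two hypotheses are the (1,1) and (3,3) entries of that relation. -/
lemma involution_braid_cases {p q r s : ℂ} (h1 : p * p + q * r = 1) (h2 : p * q + q * s = 0)
    (h3 : r * p + s * r = 0) (h4 : r * q + s * s = 1)
    (h5 : p * p + q * (p * r) = p) (h6 : s = r * (s * q) + s * s) :
    (p = 1 ∧ q = 0 ∧ r = 0 ∧ s = 1) ∨ (p = 0 ∧ s = 0 ∧ q ≠ 0 ∧ r = 1 / q) := by
  have hp : p * p * (p - 1) = 0 := by linear_combination p * h1 - h5
  have hs : s * s * (s - 1) = 0 := by linear_combination s * h4 + h6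
  have hp' : p = 0 ∨ p = 1 := by
    simpa [sub_eq_zero] using hp
  have hs' : s = 0 ∨ s = 1 := by
    simpa [sub_eq_zero] using hs
  have hps : p * p = s * s := by linear_combination h1 - h4
  rcases hp' with rfl | rfl <;> rcases hs' with rfl | rfl
  · right
    have hqr : q * r = 1 := by linear_combination h1
    have hq : q ≠ 0 := left_ne_zero_of_mul_eq_one hqr
    exact ⟨rfl, rfl, hq, by field_simp; linear_combination hqr⟩
  · simp at hps
  · simp at hps
  · left
    exact ⟨rfl, by linear_combination h2 / 2, by linear_combination h3 / 2, rfl⟩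

/-- Classification of complex homogeneous local representations of TVBₙ (n ≥ 3) into
GL_{n+1}(ℂ): the blocks S, R, G fall into one of seven cases. -/
theorem stmt_8 (n : ℕ) (hn : 3 ≤ n)
    (S R G : Matrix (Fin 2) (Fin 2) ℂ)
    (hSu : IsUnit S) (hRu : IsUnit R) (hGu : IsUnit G)
    (σ ρ γ : ℕ → Matrix (Fin (n + 1)) (Fin (n + 1)) ℂ)
    (hσ : ∀ i, σ i = localBlock n i S)
    (hρ : ∀ i, ρ i = localBlock n i R)
    (hγ : ∀ j, γ j = localBlock n j G)
    (rel1 : ∀ i, 1 ≤ i → i + 2 ≤ n →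
      σ i * σ (i + 1) * σ i = σ (i + 1) * σ i * σ (i + 1))
    (rel2 : ∀ i j, 1 ≤ i → i + 1 ≤ n → 1 ≤ j → j + 1 ≤ n →
      (i + 2 ≤ j ∨ j + 2 ≤ i) → σ i * σ j = σ j * σ i)
    (rel3 : ∀ i, 1 ≤ i → i + 1 ≤ n → ρ i * ρ i = 1)
    (rel4 : ∀ i j, 1 ≤ i → i + 1 ≤ n → 1 ≤ j → j + 1 ≤ n →
      (i + 2 ≤ j ∨ j + 2 ≤ i) → ρ i * ρ j = ρ j * ρ i)
    (rel5 : ∀ i, 1 ≤ i → i + 2 ≤ n →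
      ρ i * ρ (i + 1) * ρ i = ρ (i + 1) * ρ i * ρ (i + 1))
    (rel6 : ∀ i j, 1 ≤ i → i + 1 ≤ n → 1 ≤ j → j + 1 ≤ n →
      (i + 2 ≤ j ∨ j + 2 ≤ i) → σ i * ρ j = ρ j * σ i)
    (rel7 : ∀ i, 1 ≤ i → i + 2 ≤ n →
      ρ i * ρ (i + 1) * σ i = σ (i + 1) * ρ i * ρ (i + 1))
    (rel8 : ∀ j, 1 ≤ j → j ≤ n → γ j * γ j = 1)
    (rel9 : ∀ i j, 1 ≤ i → i ≤ n → 1 ≤ j → j ≤ n → γ i * γ j = γ j * γ i)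
    (rel10 : ∀ i j, 1 ≤ i → i + 1 ≤ n → 1 ≤ j → j ≤ n →
      (i + 2 ≤ j ∨ j + 2 ≤ i) → γ j * ρ i = ρ i * γ j)
    (rel11 : ∀ i j, 1 ≤ i → i + 1 ≤ n → 1 ≤ j → j ≤ n →
      (i + 2 ≤ j ∨ j + 2 ≤ i) → γ j * σ i = σ i * γ j)
    (rel12 : ∀ i, 1 ≤ i → i + 1 ≤ n → ρ i * γ i = γ (i + 1) * ρ i)
    (rel13 : ∀ i, 1 ≤ i → i + 1 ≤ n →
      ρ i * σ i * ρ i = γ (i + 1) * γ i * σ i * γ i * γ (i + 1)) :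
    (∃ b c r : ℂ, b ≠ 0 ∧ c ≠ 0 ∧ r ≠ 0 ∧ r ^ 2 = b / c ∧
      S = !![0, b; c, 0] ∧ R = !![0, -r; -(1 / r), 0] ∧
      G = !![(-1 : ℂ), 0; 0, 1]) ∨
    (∃ b c r : ℂ, b ≠ 0 ∧ c ≠ 0 ∧ r ≠ 0 ∧ r ^ 2 = b / c ∧
      S = !![0, b; c, 0] ∧ R = !![0, r; 1 / r, 0] ∧
      G = !![(-1 : ℂ), 0; 0, 1]) ∨
    (∃ b c r : ℂ, b ≠ 0 ∧ c ≠ 0 ∧ r ≠ 0 ∧ r ^ 2 = b / c ∧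
      S = !![0, b; c, 0] ∧ R = !![0, -r; -(1 / r), 0] ∧ G = 1) ∨
    (∃ b c r : ℂ, b ≠ 0 ∧ c ≠ 0 ∧ r ≠ 0 ∧ r ^ 2 = b / c ∧
      S = !![0, b; c, 0] ∧ R = !![0, r; 1 / r, 0] ∧ G = 1) ∨
    (∃ x : ℂ, x ≠ 0 ∧ S = 1 ∧ R = !![0, x; 1 / x, 0] ∧
      G = !![(-1 : ℂ), 0; 0, 1]) ∨
    (∃ x : ℂ, x ≠ 0 ∧ S = 1 ∧ R = !![0, x; 1 / x, 0] ∧ G = 1) ∨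
    (S = 1 ∧ R = 1 ∧ G = 1) := by
  have hn' : 3 ≤ n + 1 := by omega
  have e1 := congrArg (corner hn') (rel1 1 le_rfl hn)
  have e3 := congrArg (corner hn') (rel3 1 le_rfl (by omega))
  have e5 := congrArg (corner hn') (rel5 1 le_rfl hn)
  have e7 := congrArg (corner hn') (rel7 1 le_rfl hn)
  have e8 := congrArg (corner hn') (rel8 1 le_rfl (by omega))
  have e9 := congrArg (corner hn') (rel9 1 2 le_rfl (by omega) (by omega) (by omega))
  have e12 := congrArg (corner hn') (rel12 1 le_rfl (by omega))
  have e13 := congrArg (corner hn') (rel13 1 le_rfl (by omega))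
  have hSdet : S.det ≠ 0 := ((Matrix.isUnit_iff_isUnit_det S).mp hSu).ne_zero
  rw [Matrix.det_fin_two] at hSdet
  simp only [hσ, hρ, hγ, mul_assoc, Nat.reduceAdd, corner_localBlock_mul hn' one_le_two,
    corner_localBlock_mul hn' le_rfl, corner_one, corner_localBlock_one, corner_localBlock_two]
    at e1 e3 e5 e7 e8 e9 e12 e13
  clear rel1 rel2 rel3 rel4 rel5 rel6 rel7 rel8 rel9 rel10 rel11 rel12 rel13 hσ hρ hγ σ ρ γ
  rw [Matrix.eta_fin_two S, Matrix.eta_fin_two R, Matrix.eta_fin_two G, Matrix.one_fin_two]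
  generalize S 0 0 = a at *
  generalize S 0 1 = b at *
  generalize S 1 0 = c at *
  generalize S 1 1 = d at *
  generalize R 0 0 = p at *
  generalize R 0 1 = q at *
  generalize R 1 0 = r at *
  generalize R 1 1 = s at *
  generalize G 0 0 = g at *
  generalize G 0 1 = h at *
  generalize G 1 0 = k at *
  generalize G 1 1 = l at *
  clear hSu hRu hGu S R G
  have entry {A B : Matrix (Fin 3) (Fin 3) ℂ} (hAB : A = B) (i j : Fin 3) : A i j = B i j := by
    rw [hAB]
  -- `G` is diagonal, with lower right entry 1.
  obtain rfl : h = 0 := by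
    simpa [Matrix.mul_apply, Fin.sum_univ_succ] using entry e9 0 2
  obtain rfl : k = 0 := by
    simpa [Matrix.mul_apply, Fin.sum_univ_succ] using (entry e9 2 0).symm
  obtain rfl : l = 1 := by
    simpa [Matrix.mul_apply, Fin.sum_univ_succ] using (entry e12 2 2).symm
  have hg : g = 1 ∨ g = -1 := by
    rw [← mul_self_eq_one_iff]
    simpa [Matrix.mul_apply, Fin.sum_univ_succ] using entry e8 0 0
  have hpg : p * g = p := by
    simpa [Matrix.mul_apply, Fin.sum_univ_succ] using entry e12 0 0
  have hR := involution_braid_cases (p := p) (q := q) (r := r) (s := s)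
    (by simpa [Matrix.mul_apply, Fin.sum_univ_succ] using entry e3 0 0)
    (by simpa [Matrix.mul_apply, Fin.sum_univ_succ] using entry e3 0 1)
    (by simpa [Matrix.mul_apply, Fin.sum_univ_succ] using entry e3 1 0)
    (by simpa [Matrix.mul_apply, Fin.sum_univ_succ] using entry e3 1 1)
    (by simpa [Matrix.mul_apply, Fin.sum_univ_succ] using entry e5 0 0)
    (by simpa [Matrix.mul_apply, Fin.sum_univ_succ] using entry e5 2 2)
  rcases hR with ⟨rfl, rfl, rfl, rfl⟩ | ⟨rfl, rfl, hq, rfl⟩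
  · obtain rfl : g = 1 := by simpa using hpg
    obtain rfl : a = 1 := by
      simpa [Matrix.mul_apply, Fin.sum_univ_succ] using entry e7 0 0
    obtain rfl : b = 0 := by
      simpa [Matrix.mul_apply, Fin.sum_univ_succ] using entry e7 0 1
    obtain rfl : c = 0 := by
      simpa [Matrix.mul_apply, Fin.sum_univ_succ] using entry e7 1 0
    obtain rfl : d = 1 := by
      simpa [Matrix.mul_apply, Fin.sum_univ_succ] using entry e7 1 1
    exact .inr <| .inr <| .inr <| .inr <| .inr <| .inr ⟨rfl, rfl, rfl⟩
  · have hgg : g * g = 1 := mul_self_eq_one_iff.mpr hg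
    have had : q * (d * (1 / q)) = g * (a * g) := by
      simpa [Matrix.mul_apply, Fin.sum_univ_succ] using entry e13 0 0
    have hbc : q * (c * q) = g * (b * g) := by
      simpa [Matrix.mul_apply, Fin.sum_univ_succ] using entry e13 0 1
    obtain rfl : d = a := by
      field_simp at had
      linear_combination had + a * hgg
    have hbc' : b = q ^ 2 * c := by
      linear_combination -hbc - b * hgg
    have hdd : d * d + b * (d * c) = d := by
      simpa [Matrix.mul_apply, Fin.sum_univ_succ] using entry e1 0 0
    have hbd : b * (d * d) = 0 := by
      have h01 : d * b + b * (d * d) = b * d := by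
        simpa [Matrix.mul_apply, Fin.sum_univ_succ] using entry e1 0 1
      linear_combination h01
    rcases eq_or_ne d 0 with rfl | hd
    · have hbc0 : b * c ≠ 0 := by simpa using hSdet
      have hb := left_ne_zero_of_mul hbc0
      have hc := right_ne_zero_of_mul hbc0
      have hq2 : q ^ 2 = b / c := by rw [hbc']; field_simp
      rcases hg with rfl | rfl
      · exact .inr <| .inr <| .inr <| .inl ⟨b, c, q, hb, hc, hq, hq2, rfl, rfl, rfl⟩
      · exact .inr <| .inl ⟨b, c, q, hb, hc, hq, hq2, rfl, rfl, rfl⟩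
    · obtain rfl : b = 0 := by simpa [hd] using hbd
      obtain rfl : c = 0 := by simpa [hq] using hbc'.symm
      obtain rfl : d = 1 := by simpa [hd] using hdd
      rcases hg with rfl | rfl
      · exact .inr <| .inr <| .inr <| .inr <| .inr <| .inl ⟨q, hq, rfl, rfl, rfl⟩
      · exact .inr <| .inr <| .inr <| .inr <| .inl ⟨q, hq, rfl, rfl, rfl⟩
end

section
/- Fix n ≥ 3 and let b,c,r ∈ ℂ be nonzero with r² = b/c. For a 2×2 complex matrix M and 1 ≤ i ≤ n, let Lᵢ(M) denote the (n+1)×(n+1) complex matrix that agrees with the identity everywhere except that its 2×2 submatrix in rows and columns i, i+1 equals M. Set S = [[0,b],[c,0]], R = [[0,−r],[−1/r,0]], G = diag(−1,1), and define σᵢ = Lᵢ(S), ρᵢ = Lᵢ(R) (1 ≤ i ≤ n−1), γⱼ = Lⱼ(G) (1 ≤ j ≤ n). Then all defining relations of TVBₙ hold: σᵢσᵢ₊₁σᵢ = σᵢ₊₁σᵢσᵢ₊₁; σᵢσⱼ = σⱼσᵢ for |i−j| ≥ 2; ρᵢ² = I; ρᵢρⱼ = ρⱼρᵢ for |i−j|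 ≥ 2; ρᵢρᵢ₊₁ρᵢ = ρᵢ₊₁ρᵢρᵢ₊₁; σᵢρⱼ = ρⱼσᵢ for |i−j| ≥ 2; ρᵢρᵢ₊₁σᵢ = σᵢ₊₁ρᵢρᵢ₊₁; γⱼ² = I; γᵢγⱼ = γⱼγᵢ; γⱼρᵢ = ρᵢγⱼ and γⱼσᵢ = σᵢγⱼ for |i−j| ≥ 2; ρᵢγᵢ = γᵢ₊₁ρᵢ; ρᵢσᵢρᵢ = γᵢ₊₁γᵢσᵢγᵢγᵢ₊₁. (Hence these matrices define the complex homogeneous local representation ζ'₁ of TVBₙ into GL_{n+1}(ℂ).) -/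
/-- The operator on vectors that applies the 2×2 matrix `M` to the coordinates `p`, `q` (in this
order) and fixes all other coordinates. It is meant for `p ≠ q`. -/
def blockAct {ι : Type*} [DecidableEq ι] (p q : ι) (M : Matrix (Fin 2) (Fin 2) ℂ)
    (v : ι → ℂ) : ι → ℂ := fun k =>
  if k = p then M 0 0 * v p + M 0 1 * v q
  else if k = q then M 1 0 * v p + M 1 1 * v q
  else v k

theorem localBlock_mulVec (n i : ℕ) (hi : i + 1 < n + 1) (M : Matrix (Fin 2) (Fin 2) ℂ)
    (v : Fin (n + 1) → ℂ) :
    (localBlock n (i + 1) M).mulVec v = blockAct ⟨i, by omega⟩ ⟨i + 1, hi⟩ M v := by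
  have hne : (⟨i, by omega⟩ : Fin (n + 1)) ≠ ⟨i + 1, hi⟩ := by simp
  ext k
  simp only [Matrix.mulVec, dotProduct, blockAct]
  by_cases hp : k = ⟨i, by omega⟩
  · subst hp
    rw [Finset.sum_eq_add _ _ hne]
    · simp [localBlock]
    · rintro s - ⟨h1, h2⟩
      rw [Ne, Fin.ext_iff] at h1 h2
      simp only at h1 h2
      simp [localBlock, Fin.ext_iff, h1, h2, Ne.symm h1]
    · simp
    · simp
  by_cases hq : k = ⟨i + 1, hi⟩
  · subst hq
    rw [Finset.sum_eq_add _ _ hne]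
    · simp [localBlock]
    · rintro s - ⟨h1, h2⟩
      rw [Ne, Fin.ext_iff] at h1 h2
      simp only at h1 h2
      simp [localBlock, Fin.ext_iff, h1, h2, Ne.symm h2]
    · simp
    · simp
  · rw [if_neg hp, if_neg hq]
    rw [Fin.ext_iff] at hp hq
    simp only at hp hq
    rw [Finset.sum_eq_single k]
    · simp [localBlock, hp, hq]
    · intro s _ hs
      simp [localBlock, hp, hq, Ne.symm hs]
    · simp

theorem blockAct_comm {ι : Type*} [DecidableEq ι] {p q s t : ι} (hps : p ≠ s) (hpt : p ≠ t)
    (hqs : q ≠ s) (hqt : q ≠ t) (M N : Matrix (Fin 2) (Fin 2) ℂ) (v : ι → ℂ) :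
    blockAct p q M (blockAct s t N v) = blockAct s t N (blockAct p q M v) := by
  ext k
  by_cases hp : k = p
  · subst hp; simp [blockAct, hps, hpt, hqs, hqt]
  by_cases hq : k = q
  · subst hq; simp [blockAct, hp, hps, hpt, hqs, hqt]
  by_cases hs : k = s
  · subst hs; simp [blockAct, hp, hq, hps.symm, hpt.symm, hqs.symm, hqt.symm]
  by_cases ht : k = t
  · subst ht; simp [blockAct, hp, hq, hs, hps.symm, hpt.symm, hqs.symm, hqt.symm]
  · simp [blockAct, hp, hq, hs, ht]

theorem blockAct_braid {ι : Type*} [DecidableEq ι] {p q t : ι} (hpq : p ≠ q) (hpt : p ≠ t)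
    (hqt : q ≠ t) (x y z w : ℂ) (v : ι → ℂ) :
    blockAct p q !![0, x; y, 0] (blockAct q t !![0, x; y, 0] (blockAct p q !![0, z; w, 0] v))
      = blockAct q t !![0, z; w, 0]
        (blockAct p q !![0, x; y, 0] (blockAct q t !![0, x; y, 0] v)) := by
  ext k
  by_cases hp : k = p
  · subst hp; simp [blockAct, hpq, hpt, hqt, hpq.symm, hpt.symm, hqt.symm]; try ring
  by_cases hq : k = q
  · subst hq; simp [blockAct, hpq, hpt, hqt, hpq.symm, hpt.symm, hqt.symm]; try ring
  by_cases ht : k = t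
  · subst ht; simp [blockAct, hpq, hpt, hqt, hpq.symm, hpt.symm, hqt.symm]; try ring
  · simp [blockAct, hp, hq, ht]

theorem localBlock_comm (n i j : ℕ) (hi : 1 ≤ i) (hin : i ≤ n) (hj : 1 ≤ j) (hjn : j ≤ n)
    (hij : i + 2 ≤ j ∨ j + 2 ≤ i) (M N : Matrix (Fin 2) (Fin 2) ℂ) :
    localBlock n i M * localBlock n j N = localBlock n j N * localBlock n i M := by
  obtain ⟨i, rfl⟩ := Nat.exists_eq_add_of_le' hi
  obtain ⟨j, rfl⟩ := Nat.exists_eq_add_of_le' hj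
  refine Matrix.ext_iff_mulVec.2 fun v => ?_
  simp only [← Matrix.mulVec_mulVec]
  rw [localBlock_mulVec n i (by omega), localBlock_mulVec n j (by omega),
    localBlock_mulVec n j (by omega), localBlock_mulVec n i (by omega)]
  apply blockAct_comm <;> simp only [ne_eq, Fin.mk.injEq] <;> omega

/-- A braid-type relation between two antidiagonal blocks with arbitrary entries; it specialises to the braid relations for `σ` and for `ρ` and to
the mixed relation. -/
theorem localBlock_braid (n i : ℕ) (hi : 1 ≤ i) (hin : i + 1 ≤ n) (x y z w : ℂ) :
    localBlock n i !![0, x; y, 0] * localBlock n (i + 1) !![0, x; y, 0]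
        * localBlock n i !![0, z; w, 0]
      = localBlock n (i + 1) !![0, z; w, 0] * localBlock n i !![0, x; y, 0]
        * localBlock n (i + 1) !![0, x; y, 0] := by
  obtain ⟨i, rfl⟩ := Nat.exists_eq_add_of_le' hi
  refine Matrix.ext_iff_mulVec.2 fun v => ?_
  simp only [← Matrix.mulVec_mulVec]
  simp only [localBlock_mulVec n i (by omega), localBlock_mulVec n (i + 1) (by omega)]
  apply blockAct_braid <;> simp only [ne_eq, Fin.mk.injEq] <;> omega

theorem blockAct_G {ι : Type*} [DecidableEq ι] {p q : ι} (v : ι → ℂ) :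
    blockAct p q !![(-1 : ℂ), 0; 0, 1] v = fun k => if k = p then -v k else v k := by
  ext k
  simp only [blockAct]
  split_ifs with hp hq <;> simp [*]

/-- The matrices σᵢ = Lᵢ(S), ρᵢ = Lᵢ(R), γⱼ = Lⱼ(G) with S = [[0,b],[c,0]],
R = [[0,−r],[−1/r,0]] (r² = b/c), G = diag(−1,1) satisfy all defining relations of
TVBₙ; hence they define the homogeneous local representation ζ'₁ of TVBₙ. -/
theorem stmt_9 (n : ℕ) (hn : 3 ≤ n) (b c r : ℂ)
    (hb : b ≠ 0) (hc : c ≠ 0) (hr : r ≠ 0) (hr2 : r ^ 2 = b / c)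
    (S R G : Matrix (Fin 2) (Fin 2) ℂ)
    (hS : S = !![0, b; c, 0])
    (hR : R = !![0, -r; -(1 / r), 0])
    (hG : G = !![(-1 : ℂ), 0; 0, 1])
    (σ ρ γ : ℕ → Matrix (Fin (n + 1)) (Fin (n + 1)) ℂ)
    (hσ : ∀ i, σ i = localBlock n i S)
    (hρ : ∀ i, ρ i = localBlock n i R)
    (hγ : ∀ j, γ j = localBlock n j G) :
    (∀ i, 1 ≤ i → i + 2 ≤ n →
      σ i * σ (i + 1) * σ i = σ (i + 1) * σ i * σ (i + 1)) ∧
    (∀ i j, 1 ≤ i → i + 1 ≤ n → 1 ≤ j → j + 1 ≤ n → (i + 2 ≤ j ∨ j + 2 ≤ i) →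
      σ i * σ j = σ j * σ i) ∧
    (∀ i, 1 ≤ i → i + 1 ≤ n → ρ i * ρ i = 1) ∧
    (∀ i j, 1 ≤ i → i + 1 ≤ n → 1 ≤ j → j + 1 ≤ n → (i + 2 ≤ j ∨ j + 2 ≤ i) →
      ρ i * ρ j = ρ j * ρ i) ∧
    (∀ i, 1 ≤ i → i + 2 ≤ n →
      ρ i * ρ (i + 1) * ρ i = ρ (i + 1) * ρ i * ρ (i + 1)) ∧
    (∀ i j, 1 ≤ i → i + 1 ≤ n → 1 ≤ j → j + 1 ≤ n → (i + 2 ≤ j ∨ j + 2 ≤ i) →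
      σ i * ρ j = ρ j * σ i) ∧
    (∀ i, 1 ≤ i → i + 2 ≤ n →
      ρ i * ρ (i + 1) * σ i = σ (i + 1) * ρ i * ρ (i + 1)) ∧
    (∀ j, 1 ≤ j → j ≤ n → γ j * γ j = 1) ∧
    (∀ i j, 1 ≤ i → i ≤ n → 1 ≤ j → j ≤ n → γ i * γ j = γ j * γ i) ∧
    (∀ i j, 1 ≤ i → i + 1 ≤ n → 1 ≤ j → j ≤ n → (i + 2 ≤ j ∨ j + 2 ≤ i) →
      γ j * ρ i = ρ i * γ j) ∧
    (∀ i j, 1 ≤ i → i + 1 ≤ n → 1 ≤ j → j ≤ n → (i + 2 ≤ j ∨ j + 2 ≤ i) →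
      γ j * σ i = σ i * γ j) ∧
    (∀ i, 1 ≤ i → i + 1 ≤ n → ρ i * γ i = γ (i + 1) * ρ i) ∧
    (∀ i, 1 ≤ i → i + 1 ≤ n →
      ρ i * σ i * ρ i = γ (i + 1) * γ i * σ i * γ i * γ (i + 1)) := by
  subst hS hR hG
  simp only [hσ, hρ, hγ]
  refine ⟨fun i h1 h2 => localBlock_braid n i h1 (by omega) _ _ _ _,
    fun i j h1 h2 h3 h4 h => localBlock_comm n i j h1 (by omega) h3 (by omega) h _ _, ?_,
    fun i j h1 h2 h3 h4 h => localBlock_comm n i j h1 (by omega) h3 (by omega) h _ _,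
    fun i h1 h2 => localBlock_braid n i h1 (by omega) _ _ _ _,
    fun i j h1 h2 h3 h4 h => localBlock_comm n i j h1 (by omega) h3 (by omega) h _ _,
    fun i h1 h2 => localBlock_braid n i h1 (by omega) _ _ _ _, ?_, ?_,
    fun i j h1 h2 h3 h4 h => localBlock_comm n j i h3 h4 h1 (by omega) h.symm _ _,
    fun i j h1 h2 h3 h4 h => localBlock_comm n j i h3 h4 h1 (by omega) h.symm _ _, ?_, ?_⟩
  · intro i h1 h2
    obtain ⟨i, rfl⟩ := Nat.exists_eq_add_of_le' h1
    refine Matrix.ext_iff_mulVec.2 fun v => ?_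
    simp only [← Matrix.mulVec_mulVec, localBlock_mulVec n i (by omega), Matrix.one_mulVec]
    ext k
    by_cases hp : k = ⟨i, by omega⟩
    · subst hp; simp [blockAct, hr]
    by_cases hq : k = ⟨i + 1, by omega⟩
    · subst hq; simp [blockAct, hr]
    · simp [blockAct, hp, hq]
  · intro i h1 h2
    obtain ⟨i, rfl⟩ := Nat.exists_eq_add_of_le' h1
    refine Matrix.ext_iff_mulVec.2 fun v => ?_
    simp only [← Matrix.mulVec_mulVec, localBlock_mulVec n i (by omega), Matrix.one_mulVec]
    ext k
    simp only [blockAct_G]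
    split_ifs <;> simp
  · intro i j h1 h2 h3 h4
    obtain ⟨i, rfl⟩ := Nat.exists_eq_add_of_le' h1
    obtain ⟨j, rfl⟩ := Nat.exists_eq_add_of_le' h3
    refine Matrix.ext_iff_mulVec.2 fun v => ?_
    simp only [← Matrix.mulVec_mulVec, localBlock_mulVec n i (by omega),
      localBlock_mulVec n j (by omega)]
    ext k
    simp only [blockAct_G]
    split_ifs <;> rfl
  · intro i h1 h2
    obtain ⟨i, rfl⟩ := Nat.exists_eq_add_of_le' h1
    refine Matrix.ext_iff_mulVec.2 fun v => ?_
    simp only [← Matrix.mulVec_mulVec, localBlock_mulVec n i (by omega),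
      localBlock_mulVec n (i + 1) (by omega), blockAct_G]
    ext k
    simp only [blockAct, Fin.ext_iff]
    split_ifs <;> first | omega | simp
  · intro i h1 h2
    obtain ⟨i, rfl⟩ := Nat.exists_eq_add_of_le' h1
    refine Matrix.ext_iff_mulVec.2 fun v => ?_
    simp only [← Matrix.mulVec_mulVec, localBlock_mulVec n i (by omega),
      localBlock_mulVec n (i + 1) (by omega), blockAct_G]
    have hrb : b = r ^ 2 * c := by rw [hr2]; field_simp
    ext k
    simp only [blockAct, Fin.ext_iff]
    split_ifs <;> first | omega | (simp [hrb]; try field_simp)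
end

section
/- Let a,b,x,f,g ∈ ℂ with x ≠ 0 and a²x² − b² ≠ 0, and set S = [[a,b,0],[b/x²,a,0],[0,0,1]], R = [[0,x,0],[1/x,0,0],[0,0,1]], T = [[f,g,0],[g/x²,f,0],[0,0,1]], G₁ = diag(−1,1,1), G₂ = diag(1,−1,1). Then S, R, G₁, G₂ are invertible and all defining relations of STVB₂ hold: R² = I₃, G₁² = I₃, G₂² = I₃, G₁G₂ = G₂G₁, RG₁ = G₂R, RSR = G₂G₁SG₁G₂, ST = TS, and RTR = G₂G₁TG₁G₂. (Hence the assignment σ₁ ↦ S, ρ₁ ↦ R, τ₁ ↦ T, γ₁ ↦ G₁, γ₂ ↦ G₂ defines the complex local representation η₁ of STVB₂ into M₃(ℂ).) -/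
/-! The relations are entrywise identities. The matrices `R`, `G₁`, `G₂` are involutions, hence
invertible, and `det S = (a² x² - b²) / x²` is nonzero. The matrices `S` and `T` have the same
shape, so `local_block_conj` gives both conjugation relations. -/

/-- Both sides equal `M`: the lower-left entry `q / x ^ 2` is what makes `M` commute with the
involution `R`, and `G₂ * G₁ = diag(-1, -1, 1)` is scalar on each diagonal block of `M`. -/
lemma local_block_conj (p q x : ℂ) (hx : x ≠ 0)
    {M R G₁ G₂ : Matrix (Fin 3) (Fin 3) ℂ}
    (hM : M = !![p, q, 0; q / x ^ 2, p, 0; 0, 0, 1])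
    (hR : R = !![0, x, 0; 1 / x, 0, 0; 0, 0, 1])
    (hG₁ : G₁ = !![(-1 : ℂ), 0, 0; 0, 1, 0; 0, 0, 1])
    (hG₂ : G₂ = !![(1 : ℂ), 0, 0; 0, -1, 0; 0, 0, 1]) :
    R * M * R = G₂ * G₁ * M * G₁ * G₂ := by
  subst hM hR hG₁ hG₂
  ext i j
  fin_cases i <;> fin_cases j <;> simp [Matrix.mul_apply, Fin.sum_univ_three] <;> field_simp

/-- The assignment defining the local representation η₁ of STVB₂: the matrices
S, R, G₁, G₂ are invertible and all defining relations of STVB₂ hold. -/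
theorem stmt_12 (a b x f g : ℂ) (hx : x ≠ 0) (hab : a ^ 2 * x ^ 2 - b ^ 2 ≠ 0)
    (S R T G₁ G₂ : Matrix (Fin 3) (Fin 3) ℂ)
    (hS : S = !![a, b, 0; b / x ^ 2, a, 0; 0, 0, 1])
    (hR : R = !![0, x, 0; 1 / x, 0, 0; 0, 0, 1])
    (hT : T = !![f, g, 0; g / x ^ 2, f, 0; 0, 0, 1])
    (hG₁ : G₁ = !![(-1 : ℂ), 0, 0; 0, 1, 0; 0, 0, 1])
    (hG₂ : G₂ = !![(1 : ℂ), 0, 0; 0, -1, 0; 0, 0, 1]) :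
    IsUnit S ∧ IsUnit R ∧ IsUnit G₁ ∧ IsUnit G₂ ∧
    R * R = 1 ∧ G₁ * G₁ = 1 ∧ G₂ * G₂ = 1 ∧
    G₁ * G₂ = G₂ * G₁ ∧ R * G₁ = G₂ * R ∧
    R * S * R = G₂ * G₁ * S * G₁ * G₂ ∧
    S * T = T * S ∧
    R * T * R = G₂ * G₁ * T * G₁ * G₂ := by
  have hRR : R * R = 1 := by
    subst hR
    ext i j
    fin_cases i <;> fin_cases j <;> simp [Matrix.mul_apply, Fin.sum_univ_three, hx]
  have hG₁G₁ : G₁ * G₁ = 1 := by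
    subst hG₁
    ext i j
    fin_cases i <;> fin_cases j <;> simp [Matrix.mul_apply, Fin.sum_univ_three]
  have hG₂G₂ : G₂ * G₂ = 1 := by
    subst hG₂
    ext i j
    fin_cases i <;> fin_cases j <;> simp [Matrix.mul_apply, Fin.sum_univ_three]
  have hSu : IsUnit S := by
    rw [Matrix.isUnit_iff_isUnit_det, isUnit_iff_ne_zero]
    have hdet : S.det = (a ^ 2 * x ^ 2 - b ^ 2) / x ^ 2 := by
      rw [hS, Matrix.det_fin_three]
      simp
      field_simp
    rw [hdet]
    exact div_ne_zero hab (pow_ne_zero 2 hx)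
  refine ⟨hSu, IsUnit.of_mul_eq_one R hRR, IsUnit.of_mul_eq_one G₁ hG₁G₁,
    IsUnit.of_mul_eq_one G₂ hG₂G₂, hRR, hG₁G₁, hG₂G₂, ?_, ?_, ?_, ?_, ?_⟩
  · subst hG₁ hG₂
    simp
  · subst hR hG₁ hG₂
    simp
  · exact local_block_conj a b x hx hS hR hG₁ hG₂
  · subst hS hT
    ext i j
    fin_cases i <;> fin_cases j <;> simp [Matrix.mul_apply, Fin.sum_univ_three] <;> ring
  · exact local_block_conj f g x hx hT hR hG₁ hG₂
end

section
/- Let a,b,x,f,g ∈ ℂ with x ≠ 0. Then there is no nonzero vector v ∈ ℂ² that is a simultaneous eigenvector of the five 2×2 complex matrices [[a,b],[b/x²,a]], [[0,x],[1/x,0]], [[f,g],[g/x²,f]], [[−1,0],[0,1]], and [[1,0],[0,−1]]. (These are the 2×2 composition factors of the images of σ₁, ρ₁, τ₁, γ₁, γ₂ under the representation η₁ of STVB₂; hence η₁ is reducible to degree 2 but not further reducible to degree 1.) -/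
/-!
The images of `γ₁` and `ρ₁` already have no common eigenvector: the eigenvectors of `diag(-1, 1)`
are the nonzero vectors on the two coordinate axes, and the antidiagonal matrix with nonzero
entries `x`, `1 / x` interchanges these axes.
-/

/-- The 2×2 composition factors of the images of σ₁, ρ₁, τ₁, γ₁, γ₂ under η₁ have no
common eigenvector, so η₁ is not further reducible to degree 1. -/
theorem stmt_14 (a b x f g : ℂ) (hx : x ≠ 0) :
    ¬ ∃ v : Fin 2 → ℂ, v ≠ 0 ∧
      (∃ l : ℂ, (!![a, b; b / x ^ 2, a]).mulVec v = l • v) ∧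
      (∃ l : ℂ, (!![0, x; 1 / x, 0]).mulVec v = l • v) ∧
      (∃ l : ℂ, (!![f, g; g / x ^ 2, f]).mulVec v = l • v) ∧
      (∃ l : ℂ, (!![(-1 : ℂ), 0; 0, 1]).mulVec v = l • v) ∧
      (∃ l : ℂ, (!![(1 : ℂ), 0; 0, -1]).mulVec v = l • v) := by
  rintro ⟨v, hv, -, ⟨l, hl⟩, -, ⟨m, hm⟩, -⟩
  have e0 : x * v 1 = l * v 0 := by
    simpa [Matrix.mulVec, dotProduct, Fin.sum_univ_two] using congrFun hl 0
  have e1 : x⁻¹ * v 0 = l * v 1 := by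
    simpa [Matrix.mulVec, dotProduct, Fin.sum_univ_two] using congrFun hl 1
  have d0 : -v 0 = m * v 0 := by
    simpa [Matrix.mulVec, dotProduct, Fin.sum_univ_two] using congrFun hm 0
  have d1 : v 1 = m * v 1 := by
    simpa [Matrix.mulVec, dotProduct, Fin.sum_univ_two] using congrFun hm 1
  -- The eigenvalues `-1` and `1` of `diag(-1, 1)` differ, so an eigenvector lies on an axis.
  have hprod : v 0 * v 1 = 0 := by
    linear_combination (-(1 : ℂ) / 2) * v 1 * d0 + (1 / 2) * v 0 * d1
  -- The antidiagonal matrix swaps the two axes, so the other coordinate vanishes too.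
  have hv01 : v 0 = 0 ∧ v 1 = 0 := by
    rcases mul_eq_zero.mp hprod with h | h
    · exact ⟨h, by simpa [h, hx] using e0⟩
    · exact ⟨by simpa [h, hx] using e1, h⟩
  apply hv
  ext i
  fin_cases i
  · exact hv01.1
  · exact hv01.2
end

section
/- Let b,d,x,f,g,t,u,v ∈ ℂ with x ≠ 0, d²x² − b² ≠ 0, b ≠ 0, and b² − (d−1)²x² ≠ 0, and set S = [[d,b,0],[b/x²,d,0],[0,0,1]] and T = [[f,g,0],[g/x²,f,0],[0,0,1]]. Then t·S + u·S⁻¹ + v·I₃ = T if and only if t = (b²g + x²(b(f−1) − (d−1)dg))/(b³ − b(d−1)²x²), u = −(b−dx)(b+dx)(b(f−1) − dg + g)/(b³ − b(d−1)²x²), and v = (b³f − b²dg − bx²(d(df−2) + f) + d(d²−1)gx²)/(b³ − b(d−1)²x²). (That is, the complex local extension η₁ of ζ₁ to STVB₂ satisfies η₁(τ₁) = Φ_{t,u,v}(τ₁) exactly for these values of t, u, v.) -/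
/-!
The inverse of `S` has the same block shape as `S`, so with `D = d²x² - b²` and `w = u / D` the
matrix equation amounts to the three linear equations `t d + w d x² + v = f`, `t b - w b x² = g`
and `t + w D + v = 1`. Eliminating `t` and `v` gives `w Δ = b (f - 1) - (d - 1) g`, where
`Δ = b³ - b (d - 1)² x²` is nonzero by hypothesis; hence the system has a unique solution, the one
displayed.
-/

lemma inv_block (b d x : ℂ) (hx : x ≠ 0) (hbd : d ^ 2 * x ^ 2 - b ^ 2 ≠ 0) :
    (!![d, b, 0; b / x ^ 2, d, 0; 0, 0, 1] : Matrix (Fin 3) (Fin 3) ℂ)⁻¹ =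
      !![d * x ^ 2 / (d ^ 2 * x ^ 2 - b ^ 2), -(b * x ^ 2) / (d ^ 2 * x ^ 2 - b ^ 2), 0;
        -b / (d ^ 2 * x ^ 2 - b ^ 2), d * x ^ 2 / (d ^ 2 * x ^ 2 - b ^ 2), 0; 0, 0, 1] := by
  -- `field_simp` normalises the determinant to this order of factors
  have hbd2 : x ^ 2 * d ^ 2 - b ^ 2 ≠ 0 := by rwa [mul_comm (x ^ 2)]
  apply Matrix.inv_eq_right_inv
  ext i j
  fin_cases i <;> fin_cases j <;>
    simp [Matrix.mul_apply, Fin.sum_univ_three] <;> field_simp <;>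
    ring

/-- The `(1,1)`, `(1,2)` and `(3,3)` entries carry the whole matrix equation: the `(2,1)` entry is
the `(1,2)` entry divided by `x²`. -/
lemma matrix_eq_iff (b d x f g t w v D : ℂ) (hx : x ≠ 0) (hD : D ≠ 0) :
    t • (!![d, b, 0; b / x ^ 2, d, 0; 0, 0, 1] : Matrix (Fin 3) (Fin 3) ℂ) +
      (w * D) • !![d * x ^ 2 / D, -(b * x ^ 2) / D, 0; -b / D, d * x ^ 2 / D, 0; 0, 0, 1] +
      v • (1 : Matrix (Fin 3) (Fin 3) ℂ) = !![f, g, 0; g / x ^ 2, f, 0; 0, 0, 1] ↔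
    t * d + w * d * x ^ 2 + v = f ∧ t * b - w * b * x ^ 2 = g ∧ t + w * D + v = 1 := by
  constructor
  · intro h
    have h00 := congrFun (congrFun h 0) 0
    have h01 := congrFun (congrFun h 0) 1
    have h22 := congrFun (congrFun h 2) 2
    simp at h00 h01 h22
    field_simp at h00 h01
    exact ⟨by linear_combination h00, by linear_combination h01, h22⟩
  · rintro ⟨rfl, rfl, h⟩
    ext i j
    fin_cases i <;> fin_cases j <;> simp <;> first | exact h | (field_simp; done) | (field_simp; ring)

/-- The local extension η₁ of ζ₁ to STVB₂ agrees with the Φ-type extension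
Φ_{t,u,v} on τ₁ exactly for the stated values of t, u, v. -/
theorem stmt_16 (b d x f g t u v : ℂ) (hx : x ≠ 0)
    (hbd : d ^ 2 * x ^ 2 - b ^ 2 ≠ 0) (hb : b ≠ 0)
    (hden : b ^ 2 - (d - 1) ^ 2 * x ^ 2 ≠ 0)
    (S T : Matrix (Fin 3) (Fin 3) ℂ)
    (hS : S = !![d, b, 0; b / x ^ 2, d, 0; 0, 0, 1])
    (hT : T = !![f, g, 0; g / x ^ 2, f, 0; 0, 0, 1]) :
    t • S + u • S⁻¹ + v • (1 : Matrix (Fin 3) (Fin 3) ℂ) = T ↔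
      t = (b ^ 2 * g + x ^ 2 * (b * (f - 1) - (d - 1) * d * g)) /
            (b ^ 3 - b * (d - 1) ^ 2 * x ^ 2) ∧
      u = -((b - d * x) * (b + d * x) * (b * (f - 1) - d * g + g)) /
            (b ^ 3 - b * (d - 1) ^ 2 * x ^ 2) ∧
      v = (b ^ 3 * f - b ^ 2 * d * g - b * x ^ 2 * (d * (d * f - 2) + f) +
            d * (d ^ 2 - 1) * g * x ^ 2) /
            (b ^ 3 - b * (d - 1) ^ 2 * x ^ 2) := by
  have hΔ : b ^ 3 - b * (d - 1) ^ 2 * x ^ 2 ≠ 0 := by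
    have := mul_ne_zero hb hden
    intro h
    exact this (by linear_combination h)
  obtain ⟨w, rfl⟩ : ∃ w, u = w * (d ^ 2 * x ^ 2 - b ^ 2) := ⟨_, (div_mul_cancel₀ u hbd).symm⟩
  rw [hS, hT, inv_block b d x hx hbd, matrix_eq_iff b d x f g t w v _ hx hbd,
    eq_div_iff hΔ, eq_div_iff hΔ, eq_div_iff hΔ]
  constructor
  · rintro ⟨h1, h2, h3⟩
    have hw : w * (b ^ 3 - b * (d - 1) ^ 2 * x ^ 2) = b * (f - 1) - (d - 1) * g := by
      linear_combination b * h1 - b * h3 - (d - 1) * h2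
    have ht : t * (b ^ 3 - b * (d - 1) ^ 2 * x ^ 2) =
        b ^ 2 * g + x ^ 2 * (b * (f - 1) - (d - 1) * d * g) := by
      linear_combination (b ^ 2 - (d - 1) ^ 2 * x ^ 2) * h2 + x ^ 2 * hw
    refine ⟨ht, by linear_combination (d ^ 2 * x ^ 2 - b ^ 2) * hw, ?_⟩
    linear_combination (b ^ 3 - b * (d - 1) ^ 2 * x ^ 2) * h3 - ht -
      (d ^ 2 * x ^ 2 - b ^ 2) * hw
  · rintro ⟨ht, hu, hv⟩
    have hw : w * (b ^ 3 - b * (d - 1) ^ 2 * x ^ 2) = b * (f - 1) - (d - 1) * g :=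
      mul_left_cancel₀ hbd (by linear_combination hu)
    refine ⟨mul_right_cancel₀ hΔ ?_, mul_right_cancel₀ hΔ ?_, mul_right_cancel₀ hΔ ?_⟩
    · linear_combination d * ht + d * x ^ 2 * hw + hv
    · linear_combination b * ht - b * x ^ 2 * hw
    · linear_combination ht + (d ^ 2 * x ^ 2 - b ^ 2) * hw + hv
end
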